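/- Let p be a prime with p \equiv 1 (mod 4), and write p = a^2 + b^2 with a \equiv 1 (mod 4). Then \sum_{k=0}^{(p-1)/4} \binom{4k}{2k}^2 / 16^{2k} \equiv 1/2 + (-1)^{(p-1)/4} a - (-1)^{(p-1)/4} p/(4a) \pmod{p^2}. -/

import Mathlib

open Finset Polynomial

/-- `a ≡ b (mod p^k)` as rationals: `a - b` is `p^k` times a `p`-integral rational. -/
def ratCongr (p k : ℕ) (a b : ℚ) : Prop :=
  ∃ c : ℚ, a - b = (p : ℚ) ^ k * c ∧ ¬ (p ∣ c.den)

/-- The Legendre polynomial `P n`, defined via Rodrigues' formula. -/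
noncomputable def legendre (n : ℕ) : Polynomial ℚ :=
  ((2 ^ n * n.factorial : ℚ)⁻¹) • ((fun q => Polynomial.derivative q)^[n] ((X ^ 2 - 1) ^ n))

/-- The Legendre symbol of a `p`-integral rational `x` modulo `p`
(for `x = m/n` it is `(mn/p)`, the symbol of the residue of `x` mod `p`). -/
def ratLegendreSym (p : ℕ) [Fact p.Prime] (x : ℚ) : ℤ :=
  legendreSym p (x.num * x.den)

/-
Write `p = 4m + 1` and let `P` be the shifted Legendre polynomial of degree `2m`. Modulo `p²` its
`k`-th coefficient is `binom(2k, k)² / 16^k`, because the deviation from this formula at each step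
`k → k + 1` is a multiple of `(2(2m) + 1)² = p²`. The sum is therefore that of the even
coefficients, `(P(1) + P(-1)) / 2 = (1 + P(-1)) / 2`.

With `ω` the Teichmüller character modulo `p²`, expanding the Jacobi sum gives
`P(-1) = -J(ω^(3m), ω^(2m))`. This `J` is the image of a quartic Jacobi sum `z` in `ℤ[i]` of norm
`p`, and the congruence `z ≡ -p (mod 2 - 2i)` determines its sign: `z.re = -(-1)^m a`. As `J` is a
unit and `J J̄ = p`, where `J̄` is the image of the conjugate of `z`, we get `J̄² = 0`. Hence
`(J + J̄) J = (J + J̄)² - p` with `J + J̄ = -2 (-1)^m a`, that is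
`2 a P(-1) = (-1)^m (4 a² - p)`.
-/

theorem sub_pow_of_sq_eq_zero {R : Type*} [CommRing R] (x : R) {y : R} (hy : y ^ 2 = 0) (k : ℕ) :
    (x - y) ^ k = x ^ k - k * x ^ (k - 1) * y := by
  simpa [sub_eq_add_neg, derivative_X_pow] using
    eval_add_of_sq_eq_zero (X ^ k) x (-y) (by rw [neg_sq, hy])

section PrimeSquare

variable {p : ℕ}

/-- The reduction map `ℤ/p² → ℤ/p`. -/
def reduction (p : ℕ) : ZMod (p ^ 2) →+* ZMod p :=
  ZMod.castHom (dvd_pow_self p two_ne_zero) (ZMod p)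

theorem natCast_self_sq (p : ℕ) : (p : ZMod (p ^ 2)) ^ 2 = 0 := by
  rw [← Nat.cast_pow, ZMod.natCast_self]

theorem natCast_self_mul_self (p : ℕ) : (p : ZMod (p ^ 2)) * p = 0 := by
  rw [← sq, natCast_self_sq]

theorem natCast_dvd_of_reduction_eq_zero {y : ZMod (p ^ 2)} (h : reduction p y = 0) :
    (p : ZMod (p ^ 2)) ∣ y := by
  obtain ⟨y, rfl⟩ := ZMod.intCast_surjective y
  rw [map_intCast, ZMod.intCast_zmod_eq_zero_iff_dvd] at h
  simpa using map_dvd (Int.castRingHom (ZMod (p ^ 2))) h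

theorem natCast_mul_eq_of_reduction_eq {y z : ZMod (p ^ 2)} (h : reduction p y = reduction p z) :
    (p : ZMod (p ^ 2)) * y = p * z := by
  obtain ⟨c, hc⟩ := natCast_dvd_of_reduction_eq_zero (y := y - z) (by rw [map_sub, h, sub_self])
  linear_combination (p : ZMod (p ^ 2)) * hc + c * natCast_self_mul_self p

theorem pow_eq_pow_of_reduction_eq {y z : ZMod (p ^ 2)} (h : reduction p y = reduction p z) :
    y ^ p = z ^ p := by
  have hdvd := dvd_sub_pow_of_dvd_sub
    (natCast_dvd_of_reduction_eq_zero (y := y - z) (by rw [map_sub, h, sub_self])) 1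
  rwa [pow_one, natCast_self_sq, zero_dvd_iff, sub_eq_zero] at hdvd

variable [Fact p.Prime]

theorem isUnit_of_reduction_ne_zero {y : ZMod (p ^ 2)} (h : reduction p y ≠ 0) : IsUnit y := by
  obtain ⟨y, rfl⟩ := ZMod.natCast_zmod_surjective y
  rw [map_natCast, Ne, ZMod.natCast_eq_zero_iff] at h
  exact (ZMod.isUnit_iff_coprime _ _).2
    (((Fact.out : p.Prime).coprime_iff_not_dvd.2 h).symm.pow_right 2)

theorem natCast_mul_inv_cancel {k : ℕ} (h₀ : k ≠ 0) (h : k < p) :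
    (k : ZMod (p ^ 2)) * (k : ZMod (p ^ 2))⁻¹ = 1 :=
  ZMod.coe_mul_inv_eq_one _ ((Nat.coprime_of_lt_prime h₀ h Fact.out).symm.pow_right 2)

theorem natCast_mul_inv_natCast_sub {k : ℕ} (h₀ : k ≠ 0) (h : k < p) :
    (p : ZMod (p ^ 2)) * ((p - k : ℕ) : ZMod (p ^ 2))⁻¹ = -(p * (k : ZMod (p ^ 2))⁻¹) := by
  have hk := natCast_mul_inv_cancel h₀ h
  have hpk := natCast_mul_inv_cancel (Nat.sub_ne_zero_of_lt h) (Nat.sub_lt_self h₀.bot_lt h.le)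
  rw [Nat.cast_sub h.le] at hpk ⊢
  generalize ((p : ZMod (p ^ 2)) - k)⁻¹ = u at *
  linear_combination (-p * u) * hk - p * (k : ZMod (p ^ 2))⁻¹ * hpk
    + (u * (k : ZMod (p ^ 2))⁻¹) * natCast_self_mul_self p

theorem natCast_choose_prime_sub_one {k : ℕ} (h : k < p) :
    ((p - 1).choose k : ZMod p) = (-1) ^ k := by
  have hp : p.Prime := Fact.out
  induction k with
  | zero => simp
  | succ k ih =>
    have hpascal := Nat.choose_succ_succ (p - 1) k
    rw [Nat.succ_eq_add_one, Nat.sub_add_cancel hp.one_le] at hpascal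
    have hzero : (p.choose (k + 1) : ZMod p) = 0 :=
      (ZMod.natCast_eq_zero_iff _ _).2 (hp.dvd_choose_self k.succ_ne_zero h)
    rw [hpascal, Nat.cast_add, ih (by omega)] at hzero
    linear_combination hzero

theorem natCast_choose_prime_add {k : ℕ} (h : k < p) : ((p + k).choose k : ZMod p) = 1 := by
  have hlucas := (ZMod.natCast_eq_natCast_iff _ _ _).2
    (Choose.choose_modEq_choose_mod_mul_choose_div_nat (p := p) (n := p + k) (k := k))
  rwa [Nat.add_mod_left, Nat.mod_eq_of_lt h, Nat.choose_self, Nat.div_eq_of_lt h,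
    Nat.choose_zero_right, mul_one, Nat.cast_one] at hlucas

theorem natCast_choose_prime_sub_one_add {k : ℕ} (h₀ : k ≠ 0) (h : k < p) :
    ((p - 1 + k).choose (p - 1) : ZMod (p ^ 2)) = p * (k : ZMod (p ^ 2))⁻¹ := by
  have hk := natCast_mul_inv_cancel h₀ h
  obtain ⟨j, rfl⟩ := Nat.exists_eq_succ_of_ne_zero h₀
  have hpj : (p : ZMod (p ^ 2)) * (p + j).choose j = p * 1 :=
    natCast_mul_eq_of_reduction_eq (by
      rw [map_natCast, map_one, natCast_choose_prime_add (by omega)])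
  have hsucc := congrArg (Nat.cast : ℕ → ZMod (p ^ 2)) (Nat.choose_succ_right_eq (p + j) j)
  rw [Nat.choose_symm_add, show p - 1 + j.succ = p + j by omega]
  push_cast [Nat.add_sub_cancel] at hsucc hk ⊢
  linear_combination (-((p + j).choose (j + 1) : ZMod (p ^ 2))) * hk
    + ((j : ZMod (p ^ 2)) + 1)⁻¹ * (hsucc + hpj)

theorem neg_one_pow_mul_natCast_choose_prime {k : ℕ} (h₀ : k ≠ 0) (h : k < p) :
    (-1) ^ k * (p.choose k : ZMod (p ^ 2)) = -(p * (k : ZMod (p ^ 2))⁻¹) := by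
  have hp : p.Prime := Fact.out
  have hk := natCast_mul_inv_cancel h₀ h
  obtain ⟨j, rfl⟩ := Nat.exists_eq_succ_of_ne_zero h₀
  have hpj : (p : ZMod (p ^ 2)) * (p - 1).choose j = p * (-1) ^ j :=
    natCast_mul_eq_of_reduction_eq (by
      rw [map_natCast, map_pow, map_neg, map_one, natCast_choose_prime_sub_one (by omega)])
  have hsucc := congrArg (Nat.cast : ℕ → ZMod (p ^ 2)) (Nat.add_one_mul_choose_eq (p - 1) j)
  rw [Nat.sub_add_cancel hp.one_le] at hsucc
  have hsign : ((-1) ^ j * (-1) ^ j : ZMod (p ^ 2)) = 1 := by rw [← mul_pow]; simp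
  push_cast at hsucc hk ⊢
  rw [pow_succ (-1 : ZMod (p ^ 2))]
  generalize ((j : ZMod (p ^ 2)) + 1)⁻¹ = v at *
  linear_combination ((-1) ^ j * (p.choose (j + 1) : ZMod (p ^ 2))) * hk
    + v * (-1) ^ j * (hsucc - hpj) - p * v * hsign

theorem one_sub_pow_prime (hodd : Odd p) {w : ZMod (p ^ 2)} (hw : w ^ p = w) :
    (1 - w) ^ p = 1 - w - (p : ZMod (p ^ 2)) * ∑ k ∈ Ico 1 p, (k : ZMod (p ^ 2))⁻¹ * w ^ k := by
  have hmiddle : ∑ k ∈ Ico 1 p, (-w) ^ k * 1 ^ (p - k) * (p.choose k : ZMod (p ^ 2)) =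
      -(p * ∑ k ∈ Ico 1 p, (k : ZMod (p ^ 2))⁻¹ * w ^ k) := by
    rw [Finset.mul_sum, ← Finset.sum_neg_distrib]
    refine Finset.sum_congr rfl fun k hk => ?_
    obtain ⟨hk₁, hkp⟩ := Finset.mem_Ico.1 hk
    rw [one_pow, neg_pow]
    linear_combination w ^ k * neg_one_pow_mul_natCast_choose_prime (by omega) hkp
  rw [sub_eq_neg_add 1 w, add_pow, Finset.sum_range_succ, Finset.range_eq_Ico,
    Finset.sum_eq_sum_Ico_succ_bot (Fact.out : p.Prime).pos, hmiddle, hodd.neg_pow, hw]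
  simp
  ring

theorem sixteen_pow_mul_coeff_shiftedLegendre {n k : ℕ} (hn : p = 2 * n + 1) (hk : k ≤ n) :
    (16 : ZMod (p ^ 2)) ^ k * ((shiftedLegendre n).coeff k : ℤ) =
      (k.centralBinom : ZMod (p ^ 2)) ^ 2 := by
  rw [coeff_shiftedLegendre, Nat.choose_symm_add]
  induction k with
  | zero => simp
  | succ k ih =>
    have hunit := natCast_mul_inv_cancel (p := p) k.succ_ne_zero (by omega)
    have hchoose := congrArg (Nat.cast : ℕ → ZMod (p ^ 2)) (Nat.choose_succ_right_eq n k)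
    have hchoose' := congrArg (Nat.cast : ℕ → ZMod (p ^ 2)) (Nat.add_one_mul_choose_eq (n + k) k)
    have hcentral := congrArg (Nat.cast : ℕ → ZMod (p ^ 2)) (Nat.succ_mul_centralBinom_succ k)
    have hzero : (2 * n + 1 : ZMod (p ^ 2)) * (2 * n + 1) = 0 := by
      simpa [hn] using natCast_self_mul_self p
    specialize ih (by omega)
    push_cast [show k ≤ n by omega] at ih hchoose hchoose' hcentral hunit ⊢
    rw [← add_assoc]
    have hstep : ((k : ZMod (p ^ 2)) + 1) ^ 2 * (16 ^ (k + 1) * ((-1) ^ (k + 1) *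
        (n.choose (k + 1)) * ((n + k + 1).choose (k + 1)))) =
        (k + 1) ^ 2 * ((k + 1).centralBinom : ZMod (p ^ 2)) ^ 2 := by
      rw [pow_succ (-1 : ZMod (p ^ 2)), pow_succ (16 : ZMod (p ^ 2))]
      generalize (-1 : ZMod (p ^ 2)) ^ k = s at *
      generalize (16 : ZMod (p ^ 2)) ^ k = t at *
      generalize (n.choose (k + 1) : ZMod (p ^ 2)) = A' at *
      generalize ((n + k + 1).choose (k + 1) : ZMod (p ^ 2)) = B' at *
      generalize ((k + 1).centralBinom : ZMod (p ^ 2)) = C' at *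
      linear_combination (-16 * s * t * (k + 1) * B') * hchoose
        + (16 * s * t * (n.choose k : ZMod (p ^ 2)) * (n - k)) * hchoose'
        - ((k + 1) * C' + 2 * (2 * k + 1) * (k.centralBinom : ZMod (p ^ 2))) * hcentral
        + (-16 * (n - k) * (n + k + 1)) * ih
        - 4 * (k.centralBinom : ZMod (p ^ 2)) ^ 2 * hzero
    exact (IsUnit.of_mul_eq_one _ hunit).pow 2 |>.mul_left_cancel hstep

end PrimeSquare

theorem neg_one_pow_sub_of_le {R : Type*} [Ring R] {k a : ℕ} (h : k ≤ a) :
    (-1 : R) ^ (a - k) = (-1) ^ a * (-1) ^ k := by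
  rw [← pow_add]
  exact neg_one_pow_congr (by rw [Nat.even_sub h, Nat.even_add])

section Teichmuller

theorem sum_mulChar_eq_zero_of_isUnit_sub_one {R S : Type*} [CommMonoid R] [Fintype R]
    [CommRing S] (χ : MulChar R S) {u : Rˣ} (hu : IsUnit (χ u - 1)) : ∑ x, χ x = 0 := by
  have htranslate : χ u * ∑ x, χ x = ∑ x, χ x := by
    simp only [Finset.mul_sum, ← map_mul]
    exact u.mulLeft_bijective.sum_comp χ
  exact hu.mul_right_eq_zero.1 (by rw [sub_mul, htranslate, one_mul, sub_self])

variable {p : ℕ} [Fact p.Prime]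

theorem reduction_natCast_val (x : ZMod p) : reduction p (x.val : ZMod (p ^ 2)) = x := by
  rw [map_natCast, ZMod.natCast_zmod_val]

/-- The Teichmüller character modulo `p²`. It sends a residue class to the `p`-th power of any of
its lifts, of which `ZMod.val` picks one. -/
def teichmuller (p : ℕ) [Fact p.Prime] : MulChar (ZMod p) (ZMod (p ^ 2)) where
  toFun x := (x.val : ZMod (p ^ 2)) ^ p
  map_one' := by simp [ZMod.val_one]
  map_mul' x y := by
    rw [← mul_pow]
    exact pow_eq_pow_of_reduction_eq (by simp only [map_mul, reduction_natCast_val])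
  map_nonunit' x hx := by
    rw [isUnit_iff_ne_zero, not_not] at hx
    simp [hx, (Fact.out : p.Prime).ne_zero]

theorem teichmuller_reduction (y : ZMod (p ^ 2)) : teichmuller p (reduction p y) = y ^ p :=
  pow_eq_pow_of_reduction_eq (reduction_natCast_val _)

theorem reduction_teichmuller (x : ZMod p) : reduction p (teichmuller p x) = x :=
  (map_pow (reduction p) _ p).trans (by rw [reduction_natCast_val, ZMod.pow_card])

theorem teichmuller_pow_prime (x : ZMod p) : teichmuller p x ^ p = teichmuller p x := by
  rw [← teichmuller_reduction, reduction_teichmuller]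

theorem teichmuller_one_sub (x : ZMod p) : teichmuller p (1 - x) = (1 - teichmuller p x) ^ p := by
  rw [← teichmuller_reduction (1 - _), map_sub (reduction p), map_one, reduction_teichmuller]

theorem isUnit_teichmuller_pow_sub_one {g : (ZMod p)ˣ} (hg : ∀ x, x ∈ Subgroup.zpowers g) {N : ℕ}
    (hN : ¬ p - 1 ∣ N) : IsUnit ((teichmuller p ^ N) g - 1) := by
  apply isUnit_of_reduction_ne_zero
  rw [MulChar.pow_apply_coe, map_sub, map_pow, reduction_teichmuller, map_one, sub_ne_zero]
  rw [← ZMod.card_units p, ← Nat.card_eq_fintype_card, ← orderOf_eq_card_of_forall_mem_zpowers hg,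
    orderOf_dvd_iff_pow_eq_one] at hN
  exact fun h => hN (Units.ext (by simpa using h))

theorem teichmuller_pow_sub_one : teichmuller p ^ (p - 1) = 1 := by
  rw [← ZMod.card_units p, MulChar.pow_card_eq_one]

theorem teichmuller_pow_half_apply_generator {n : ℕ} (hn : p = 2 * n + 1) {g : (ZMod p)ˣ}
    (hg : ∀ x, x ∈ Subgroup.zpowers g) : (teichmuller p ^ n) g = -1 := by
  have hn₀ : 0 < n := by have := (Fact.out : p.Prime).one_lt; omega
  have hunit := isUnit_teichmuller_pow_sub_one hg (Nat.not_dvd_of_pos_of_lt hn₀ (by omega))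
  have hsq : (teichmuller p ^ n) g * (teichmuller p ^ n) g = 1 := by
    rw [← MulChar.mul_apply, ← pow_add, show n + n = p - 1 by omega, teichmuller_pow_sub_one,
      MulChar.one_apply_coe]
  exact eq_neg_of_add_eq_zero_left (hunit.mul_right_eq_zero.1 (by linear_combination hsq))

theorem sum_teichmuller_pow {N : ℕ} (hN : N ≠ 0) :
    ∑ x, teichmuller p x ^ N = if p - 1 ∣ N then (p - 1 : ZMod (p ^ 2)) else 0 := by
  simp only [← MulChar.pow_apply' _ hN]
  split_ifs with hdvd
  · obtain ⟨c, rfl⟩ := hdvd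
    rw [pow_mul, teichmuller_pow_sub_one, one_pow, MulChar.sum_one_eq_card_units, ZMod.card_units,
      Nat.cast_pred (Fact.out : p.Prime).pos]
  · obtain ⟨g, hg⟩ := IsCyclic.exists_generator (α := (ZMod p)ˣ)
    exact sum_mulChar_eq_zero_of_isUnit_sub_one _ (isUnit_teichmuller_pow_sub_one hg hdvd)

theorem sum_teichmuller_pow_mul_one_sub_pow {N K t : ℕ} (hN : N ≠ 0) (hK : K < p - 1)
    (ht : t < p - 1) (hNt : p - 1 ∣ N + t) :
    ∑ x, teichmuller p x ^ N * (1 - teichmuller p x) ^ K =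
      (p - 1 : ZMod (p ^ 2)) * (-1) ^ t * K.choose t := by
  have hexpand (x : ZMod p) : teichmuller p x ^ N * (1 - teichmuller p x) ^ K =
      ∑ i ∈ range (K + 1), (-1) ^ i * (K.choose i : ZMod (p ^ 2)) * teichmuller p x ^ (N + i) := by
    rw [sub_eq_neg_add, add_pow, Finset.mul_sum]
    refine Finset.sum_congr rfl fun i _ => ?_
    rw [one_pow, neg_pow, pow_add (teichmuller p x)]
    ring
  have hdvd {i : ℕ} (hi : i < p - 1) : p - 1 ∣ N + i ↔ t = i := by
    refine ⟨fun h => ?_, fun h => h ▸ hNt⟩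
    have hmod : t ≡ i [MOD p - 1] :=
      Nat.ModEq.add_left_cancel' N ((Nat.modEq_zero_iff_dvd.2 hNt).trans
        (Nat.modEq_zero_iff_dvd.2 h).symm)
    exact hmod.eq_of_lt_of_lt ht hi
  have hterm : ∀ i ∈ range (K + 1), (-1) ^ i * (K.choose i : ZMod (p ^ 2)) *
      ∑ x, teichmuller p x ^ (N + i) =
      if t = i then (p - 1 : ZMod (p ^ 2)) * (-1) ^ i * K.choose i else 0 := by
    intro i hi
    rw [sum_teichmuller_pow (by omega), if_congr (hdvd (by have := mem_range.1 hi; omega)) rfl rfl,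
      mul_ite, mul_zero]
    congr 1
    ring
  simp only [hexpand]
  rw [Finset.sum_comm]
  simp only [← Finset.mul_sum]
  rw [Finset.sum_congr rfl hterm, Finset.sum_ite_eq, ite_eq_left_iff]
  intro hKt
  rw [Nat.choose_eq_zero_of_lt (by simpa using hKt), Nat.cast_zero, mul_zero]

theorem jacobiSum_teichmuller_pow (hodd : Odd p) {A B : ℕ} (hA : A ≠ 0) (hB : B ≠ 0) :
    jacobiSum (teichmuller p ^ A) (teichmuller p ^ B) =
      ∑ x, teichmuller p x ^ A * (1 - teichmuller p x) ^ B -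
        (B * p : ZMod (p ^ 2)) * ∑ k ∈ Ico 1 p, (k : ZMod (p ^ 2))⁻¹ *
          ∑ x, teichmuller p x ^ (A + k) * (1 - teichmuller p x) ^ (B - 1) := by
  have hsq (y : ZMod (p ^ 2)) : ((p : ZMod (p ^ 2)) * y) ^ 2 = 0 := by
    rw [mul_pow, natCast_self_sq, zero_mul]
  simp only [Finset.mul_sum]
  rw [jacobiSum, Finset.sum_comm, ← Finset.sum_sub_distrib]
  refine Finset.sum_congr rfl fun x _ => ?_
  rw [MulChar.pow_apply' _ hA, MulChar.pow_apply' _ hB, teichmuller_one_sub,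
    one_sub_pow_prime hodd (teichmuller_pow_prime x), sub_pow_of_sq_eq_zero _ (hsq _), mul_sub]
  congr 1
  simp only [Finset.mul_sum, pow_add]
  refine Finset.sum_congr rfl fun k _ => ?_
  ring

theorem natCast_mul_inv_mul_sum_teichmuller {a K k : ℕ} (ha : a < p - 1)
    (hK : K < p - 1) (hk : k ≠ 0) (hka : k ≤ a) :
    (p : ZMod (p ^ 2)) * ((k : ZMod (p ^ 2))⁻¹ *
        ∑ x, teichmuller p x ^ (p - 1 - a + k) * (1 - teichmuller p x) ^ K) =
      -(p * (-1) ^ a * ((-1) ^ k * (k : ZMod (p ^ 2))⁻¹ * K.choose (a - k))) := by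
  rw [sum_teichmuller_pow_mul_one_sub_pow (t := a - k) (by omega) hK (by omega)
    (by rw [show p - 1 - a + k + (a - k) = p - 1 by omega]), neg_one_pow_sub_of_le hka]
  linear_combination ((k : ZMod (p ^ 2))⁻¹ * (-1) ^ a * (-1) ^ k *
    K.choose (a - k)) * natCast_self_mul_self p

theorem natCast_mul_inv_mul_sum_teichmuller_reflect {a K k : ℕ} (hK : K < p - 1)
    (hk : k ≠ 0) (hka : k < p - a) :
    (p : ZMod (p ^ 2)) * (((p - k : ℕ) : ZMod (p ^ 2))⁻¹ *
        ∑ x, teichmuller p x ^ (p - 1 - a + (p - k)) * (1 - teichmuller p x) ^ K) =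
      -(p * (-1) ^ a * ((-1) ^ k * (k : ZMod (p ^ 2))⁻¹ * K.choose (a + k - 1))) := by
  have hsign : ((-1) ^ (a + k - 1) : ZMod (p ^ 2)) = -((-1) ^ a * (-1) ^ k) := by
    rw [neg_one_pow_sub_of_le (by omega), pow_add]
    ring
  rw [sum_teichmuller_pow_mul_one_sub_pow (t := a + k - 1) (by omega) hK (by omega)
    (by rw [show p - 1 - a + (p - k) + (a + k - 1) = 2 * (p - 1) by omega]; exact dvd_mul_left _ _),
    ← mul_assoc, natCast_mul_inv_natCast_sub hk (by omega), hsign]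
  linear_combination ((k : ZMod (p ^ 2))⁻¹ * (-1) ^ a * (-1) ^ k *
    K.choose (a + k - 1)) * natCast_self_mul_self p

theorem jacobiSum_teichmuller_pow_sub (hodd : Odd p) {a b : ℕ} (ha : a < p - 1) (hb₀ : b ≠ 0)
    (hb : b < p - 1) :
    jacobiSum (teichmuller p ^ (p - 1 - a)) (teichmuller p ^ b) =
      (-1) ^ a * ((p - 1 : ZMod (p ^ 2)) * b.choose a + (b * p : ZMod (p ^ 2)) *
        (∑ k ∈ Ico 1 (a + 1), (-1) ^ k * (k : ZMod (p ^ 2))⁻¹ * (b - 1).choose (a - k) +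
          ∑ k ∈ Ico 1 (p - a), (-1) ^ k * (k : ZMod (p ^ 2))⁻¹ * (b - 1).choose (a + k - 1))) := by
  have hlow := Finset.sum_congr rfl fun k (hk : k ∈ Ico 1 (a + 1)) =>
    have hk' := Finset.mem_Ico.1 hk
    natCast_mul_inv_mul_sum_teichmuller (k := k) ha (K := b - 1) (by omega) (by omega) (by omega)
  have hhigh := Finset.sum_congr rfl fun k (hk : k ∈ Ico 1 (p - a)) =>
    have hk' := Finset.mem_Ico.1 hk
    natCast_mul_inv_mul_sum_teichmuller_reflect (k := k) (K := b - 1) (by omega) (by omega) hk'.2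
  have hreflect := Finset.sum_Ico_reflect (fun k => (p : ZMod (p ^ 2)) * ((k : ZMod (p ^ 2))⁻¹ *
      ∑ x, teichmuller p x ^ (p - 1 - a + k) * (1 - teichmuller p x) ^ (b - 1))) 1
      (show p - a ≤ p + 1 by omega)
  rw [hhigh, show p + 1 - (p - a) = a + 1 by omega, Nat.add_sub_cancel] at hreflect
  rw [jacobiSum_teichmuller_pow hodd (by omega) hb₀,
    sum_teichmuller_pow_mul_one_sub_pow (t := a) (by omega) hb ha
      (by rw [Nat.sub_add_cancel ha.le]), mul_assoc (b : ZMod (p ^ 2)), Finset.mul_sum,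
    ← Finset.sum_Ico_consecutive _ (show 1 ≤ a + 1 by omega) (show a + 1 ≤ p by omega),
    hlow, ← hreflect]
  simp only [Finset.sum_neg_distrib, ← Finset.mul_sum]
  ring

theorem jacobiSum_teichmuller_pow_three_mul {m : ℕ} (hm : p = 4 * m + 1) :
    jacobiSum (teichmuller p ^ (3 * m)) (teichmuller p ^ (2 * m)) =
      (-1) ^ m * ((p - 1 : ZMod (p ^ 2)) * m.centralBinom - (p : ZMod (p ^ 2)) *
        ∑ k ∈ Ico 1 (m + 1), (-1) ^ k * (k : ZMod (p ^ 2))⁻¹ * (2 * m - 1).choose (m - k)) := by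
  have hp : p.Prime := Fact.out
  have hm₀ : m ≠ 0 := by rintro rfl; exact hp.one_lt.ne' hm
  have hsymm : ∑ k ∈ Ico 1 (p - m),
      (-1) ^ k * (k : ZMod (p ^ 2))⁻¹ * ((2 * m - 1).choose (m + k - 1) : ZMod (p ^ 2)) =
      ∑ k ∈ Ico 1 (m + 1), (-1) ^ k * (k : ZMod (p ^ 2))⁻¹ * (2 * m - 1).choose (m - k) := by
    rw [← Finset.sum_Ico_consecutive _ (show 1 ≤ m + 1 by omega) (show m + 1 ≤ p - m by omega)]
    rw [Finset.sum_eq_zero (s := Ico (m + 1) (p - m)), add_zero]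
    · refine Finset.sum_congr rfl fun k hk => ?_
      obtain ⟨hk₁, hkm⟩ := Finset.mem_Ico.1 hk
      rw [Nat.choose_symm_of_eq_add (show 2 * m - 1 = (m + k - 1) + (m - k) by omega)]
    · intro k hk
      rw [Nat.choose_eq_zero_of_lt (by have := (Finset.mem_Ico.1 hk).1; omega), Nat.cast_zero,
        mul_zero]
  have hfour : (4 * m + 1 : ZMod (p ^ 2)) = p := by rw [hm]; push_cast; rfl
  have hJ := jacobiSum_teichmuller_pow_sub (p := p) ⟨2 * m, by omega⟩ (a := m) (b := 2 * m)
    (by omega) (by omega) (by omega)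
  rw [hsymm, show p - 1 - m = 3 * m by omega] at hJ
  rw [hJ, Nat.centralBinom]
  push_cast
  generalize ∑ k ∈ Ico 1 (m + 1),
    (-1) ^ k * (k : ZMod (p ^ 2))⁻¹ * ((2 * m - 1).choose (m - k) : ZMod (p ^ 2)) = S
  linear_combination (-1) ^ m * p * S * hfour + (-1) ^ m * S * natCast_self_mul_self p

end Teichmuller

section LegendreValue

-- Both sides are `(1 + X)^n / (1 - X)^(n + 1)`.
theorem mk_choose_mul_one_add_X_pow (R : Type*) [CommRing R] (n : ℕ) :
    (PowerSeries.mk fun k => ((n + k).choose n : R)) * (1 + PowerSeries.X) ^ n =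
      (PowerSeries.mk fun k => ((2 * n + k).choose (2 * n) : R)) * (1 - PowerSeries.X ^ 2) ^ n := by
  have hn := PowerSeries.mk_add_choose_mul_one_sub_pow_eq_one R n
  have h2n := PowerSeries.mk_add_choose_mul_one_sub_pow_eq_one R (2 * n)
  generalize (PowerSeries.mk fun k => ((n + k).choose n : R)) = F at *
  generalize (PowerSeries.mk fun k => ((2 * n + k).choose (2 * n) : R)) = G at *
  have hF : F = G * (1 - PowerSeries.X) ^ n :=
    calc F = F * (G * (1 - PowerSeries.X) ^ (2 * n + 1)) := by rw [h2n, mul_one]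
      _ = G * (1 - PowerSeries.X) ^ n * (F * (1 - PowerSeries.X) ^ (n + 1)) := by ring
      _ = G * (1 - PowerSeries.X) ^ n := by rw [hn, mul_one]
  rw [hF, mul_assoc, ← mul_pow]
  ring

theorem coeff_one_add_X_pow_powerSeries (R : Type*) [CommRing R] (n k : ℕ) :
    PowerSeries.coeff k ((1 + PowerSeries.X : PowerSeries R) ^ n) = n.choose k := by
  rw [← Polynomial.coeff_one_add_X_pow, ← Polynomial.coeff_coe]
  simp

theorem one_sub_X_sq_pow (R : Type*) [CommRing R] (n : ℕ) :
    (1 - PowerSeries.X ^ 2 : PowerSeries R) ^ n = ∑ i ∈ range (n + 1),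
      PowerSeries.C ((-1) ^ i * (n.choose i : R)) * PowerSeries.X ^ (2 * i) := by
  rw [sub_eq_neg_add, add_pow]
  refine Finset.sum_congr rfl fun i _ => ?_
  simp only [one_pow, mul_one, map_mul, map_pow, map_neg, map_one, map_natCast]
  rw [neg_pow, pow_mul]
  ring

theorem eval_neg_one_shiftedLegendre (n : ℕ) :
    (shiftedLegendre n).eval (-1) = ∑ k ∈ range (n + 1), (n.choose k * (n + k).choose n : ℤ) := by
  rw [eval_eq_sum_range, natDegree_shiftedLegendre]
  refine Finset.sum_congr rfl fun k _ => ?_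
  have hsign : ((-1) ^ k * (-1) ^ k : ℤ) = 1 := by rw [← mul_pow]; simp
  rw [coeff_shiftedLegendre]
  linear_combination (n.choose k * (n + k).choose n : ℤ) * hsign

theorem eval_neg_one_shiftedLegendre_eq_alternating_sum (n : ℕ) :
    (shiftedLegendre n).eval (-1) = ∑ i ∈ range (n / 2 + 1),
      (-1) ^ i * (n.choose i * (2 * n + (n - 2 * i)).choose (2 * n) : ℤ) := by
  have hcoeff := congrArg (PowerSeries.coeff n) (mk_choose_mul_one_add_X_pow ℤ n)
  have hleft : PowerSeries.coeff n ((PowerSeries.mk fun k => ((n + k).choose n : ℤ)) *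
      (1 + PowerSeries.X) ^ n) = (shiftedLegendre n).eval (-1) := by
    rw [PowerSeries.coeff_mul, Finset.Nat.sum_antidiagonal_eq_sum_range_succ_mk,
      eval_neg_one_shiftedLegendre]
    refine Finset.sum_congr rfl fun k hk => ?_
    rw [PowerSeries.coeff_mk, coeff_one_add_X_pow_powerSeries,
      Nat.choose_symm (Nat.lt_succ_iff.1 (mem_range.1 hk)), mul_comm]
  have hright : PowerSeries.coeff n ((PowerSeries.mk fun k => ((2 * n + k).choose (2 * n) : ℤ)) *
      (1 - PowerSeries.X ^ 2) ^ n) = ∑ i ∈ range (n + 1), if 2 * i ≤ n then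
        (-1) ^ i * (n.choose i * (2 * n + (n - 2 * i)).choose (2 * n) : ℤ) else 0 := by
    rw [one_sub_X_sq_pow, Finset.mul_sum, map_sum]
    refine Finset.sum_congr rfl fun i _ => ?_
    rw [mul_left_comm, PowerSeries.coeff_C_mul, PowerSeries.coeff_mul_X_pow', PowerSeries.coeff_mk,
      mul_ite, mul_zero, mul_assoc]
  rw [← hleft, hcoeff, hright, ← Finset.sum_filter]
  congr 1
  ext i
  simp only [mem_filter, mem_range]
  omega

theorem eval_one_shiftedLegendre (n : ℕ) : (shiftedLegendre n).eval 1 = (-1) ^ n := by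
  have hsymm := shiftedLegendre_eval_symm n (1 : ℤ)
  rw [sub_self, ← coe_aeval_eq_eval] at *
  rw [hsymm, coe_aeval_eq_eval, ← coeff_zero_eq_eval_zero, coeff_shiftedLegendre]
  simp

theorem eval_one_add_eval_neg_one {R : Type*} [CommRing R] {q : R[X]} {m : ℕ}
    (hq : q.natDegree ≤ 2 * m) :
    q.eval 1 + q.eval (-1) = 2 * ∑ k ∈ range (m + 1), q.coeff (2 * k) := by
  rw [eval_eq_sum_range' (Nat.lt_succ_of_le hq), eval_eq_sum_range' (Nat.lt_succ_of_le hq),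
    ← Finset.sum_add_distrib]
  clear hq
  induction m with
  | zero => simp [two_mul]
  | succ m ih =>
    rw [show (2 * (m + 1)).succ = (2 * m).succ + 1 + 1 by omega, Finset.sum_range_succ,
      Finset.sum_range_succ, ih, Finset.sum_range_succ _ (m + 1)]
    simp only [one_pow, pow_succ, pow_mul, mul_add, mul_one]
    ring

theorem centralBinom_succ_eq_two_mul_choose (l : ℕ) :
    (l + 1).centralBinom = 2 * (2 * l + 1).choose l := by
  rw [Nat.centralBinom_eq_two_mul_choose, mul_add_one, Nat.choose_succ_succ,
    Nat.choose_symm_half]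
  ring

theorem centralBinom_add_two_mul_alternating_sum {m : ℕ} (hm : m ≠ 0) :
    (m.centralBinom : ℤ) +
      2 * ∑ k ∈ Ico 1 (m + 1), (-1) ^ k * ((2 * m).choose (m - k) : ℤ) = 0 := by
  obtain ⟨l, rfl⟩ := Nat.exists_eq_succ_of_ne_zero hm
  have hsum : ∑ k ∈ Ico 1 (l + 2), (-1) ^ k * ((2 * l + 2).choose (l + 1 - k) : ℤ) =
      (-1) ^ (l + 1) * ∑ j ∈ range (l + 1), (-1) ^ j * ((2 * l + 2).choose j : ℤ) := by
    have hreflect := Finset.sum_Ico_reflect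
      (fun j => (-1) ^ (l + 1) * ((-1) ^ j * ((2 * l + 2).choose j : ℤ))) 1 (Nat.le_refl (l + 2))
    rw [Nat.sub_self, Nat.add_sub_cancel, ← Finset.range_eq_Ico] at hreflect
    rw [Finset.mul_sum, ← hreflect]
    refine Finset.sum_congr rfl fun k hk => ?_
    rw [← mul_assoc, ← neg_one_pow_sub_of_le (Nat.sub_le _ k),
      Nat.sub_sub_self (Nat.lt_succ_iff.1 (mem_Ico.1 hk).2)]
  have hsign : ((-1) ^ l * (-1) ^ l : ℤ) = 1 := by rw [← mul_pow]; simp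
  rw [Nat.succ_eq_add_one, mul_add_one, hsum, Int.alternating_sum_range_choose_eq_choose,
    centralBinom_succ_eq_two_mul_choose, pow_succ]
  push_cast
  linear_combination (-2 * ((2 * l + 1).choose l : ℤ)) * hsign

variable {p : ℕ} [Fact p.Prime]

theorem eval_neg_one_shiftedLegendre_two_mul {m : ℕ} (hm : p = 4 * m + 1) :
    (((shiftedLegendre (2 * m)).eval (-1) : ℤ) : ZMod (p ^ 2)) =
      (-1) ^ m * (m.centralBinom + (p : ZMod (p ^ 2)) * ∑ k ∈ Ico 1 (m + 1),
        (-1) ^ k * ((2 * k : ℕ) : ZMod (p ^ 2))⁻¹ * (2 * m).choose (m - k)) := by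
  rw [eval_neg_one_shiftedLegendre_eq_alternating_sum, Nat.mul_div_cancel_left _ two_pos,
    Finset.range_eq_Ico]
  have hreflect := Finset.sum_Ico_reflect (fun i => (-1) ^ i * ((2 * m).choose i *
    (2 * (2 * m) + (2 * m - 2 * i)).choose (2 * (2 * m)) : ℤ)) 0 (Nat.le_refl (m + 1))
  rw [Nat.sub_self, Nat.sub_zero] at hreflect
  rw [← hreflect, Finset.sum_eq_sum_Ico_succ_bot m.succ_pos]
  push_cast
  rw [mul_add, Finset.mul_sum, Finset.mul_sum]
  congr 1
  · simp [Nat.centralBinom]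
  refine Finset.sum_congr rfl fun k hk => ?_
  obtain ⟨hk₁, hkm⟩ := Finset.mem_Ico.1 hk
  rw [show 2 * m - 2 * (m - k) = 2 * k by omega, show 2 * (2 * m) = p - 1 by omega,
    natCast_choose_prime_sub_one_add (by omega) (by omega), neg_one_pow_sub_of_le (by omega)]
  push_cast
  ring

theorem natCast_mul_inv_two_mul_choose_sub {m k : ℕ} (hm : p = 4 * m + 1) (hk : k ≠ 0)
    (hkm : k ≤ m) :
    (p : ZMod (p ^ 2)) * (((2 * k : ℕ) : ZMod (p ^ 2))⁻¹ * (2 * m).choose (m - k) -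
      (k : ZMod (p ^ 2))⁻¹ * (2 * m - 1).choose (m - k)) = p * (2 * (2 * m).choose (m - k)) := by
  have hp : (p : ZMod (p ^ 2)) = 4 * m + 1 := by
    exact_mod_cast congrArg (Nat.cast : ℕ → ZMod (p ^ 2)) hm
  have hpp := natCast_self_mul_self p
  have habsorb : (2 * m * (2 * m - 1).choose (m - k) : ZMod (p ^ 2)) =
      (2 * m).choose (m - k) * (m + k) := by
    have h := Nat.choose_mul_succ_eq (2 * m - 1) (m - k)
    rw [show 2 * m - 1 + 1 = 2 * m by omega, show 2 * m - (m - k) = m + k by omega] at h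
    exact_mod_cast (congrArg (Nat.cast : ℕ → ZMod (p ^ 2)) ((mul_comm _ _).trans h))
  have hkinv := natCast_mul_inv_cancel (p := p) hk (by omega)
  have h2kinv := natCast_mul_inv_cancel (p := p) (k := 2 * k) (by omega) (by omega)
  push_cast at h2kinv ⊢
  generalize (k : ZMod (p ^ 2))⁻¹ = u at *
  generalize (2 * k : ZMod (p ^ 2))⁻¹ = v at *
  generalize ((2 * m).choose (m - k) : ZMod (p ^ 2)) = C at *
  generalize ((2 * m - 1).choose (m - k) : ZMod (p ^ 2)) = C' at *
  have hu : u = 2 * v := by linear_combination 2 * v * hkinv - u * h2kinv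
  subst hu
  have hC' : p * C' = -2 * p * C * (m + k) := by
    linear_combination (-2 * p) * habsorb - p * C' * hp + C' * hpp
  have hC : p * C * v = -4 * p * C * v * m := by
    linear_combination -p * C * v * hp + C * v * hpp
  linear_combination hC - 2 * v * hC' + 2 * p * C * hkinv

theorem eval_neg_one_shiftedLegendre_add_jacobiSum {m : ℕ} (hm : p = 4 * m + 1) :
    (((shiftedLegendre (2 * m)).eval (-1) : ℤ) : ZMod (p ^ 2)) +
      jacobiSum (teichmuller p ^ (3 * m)) (teichmuller p ^ (2 * m)) = 0 := by
  have hm₀ : m ≠ 0 := by rintro rfl; exact (Fact.out : p.Prime).one_lt.ne' hm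
  have halt := congrArg (Int.cast : ℤ → ZMod (p ^ 2)) (centralBinom_add_two_mul_alternating_sum hm₀)
  push_cast at halt
  have hterms : (p : ZMod (p ^ 2)) * ∑ k ∈ Ico 1 (m + 1),
        (-1) ^ k * ((2 * k : ℕ) : ZMod (p ^ 2))⁻¹ * (2 * m).choose (m - k) -
      p * ∑ k ∈ Ico 1 (m + 1), (-1) ^ k * (k : ZMod (p ^ 2))⁻¹ * (2 * m - 1).choose (m - k) =
      p * (2 * ∑ k ∈ Ico 1 (m + 1), (-1) ^ k * ((2 * m).choose (m - k) : ZMod (p ^ 2))) := by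
    simp only [← mul_sub, ← Finset.sum_sub_distrib, Finset.mul_sum]
    refine Finset.sum_congr rfl fun k hk => ?_
    obtain ⟨hk₁, hkm⟩ := Finset.mem_Ico.1 hk
    linear_combination (-1) ^ k *
      natCast_mul_inv_two_mul_choose_sub hm (Nat.ne_of_gt hk₁) (Nat.lt_succ_iff.1 hkm)
  rw [eval_neg_one_shiftedLegendre_two_mul hm, jacobiSum_teichmuller_pow_three_mul hm]
  linear_combination (-1) ^ m * (hterms + p * halt)

end LegendreValue

section GaussianJacobiSum

theorem apply_generator_sub_one_dvd {M R : Type*} [CommMonoid M] [Finite M] [CommRing R]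
    {g : Mˣ} (hg : ∀ x, x ∈ Subgroup.zpowers g) (χ : MulChar M R) (x : Mˣ) :
    χ g - 1 ∣ χ x - 1 := by
  obtain ⟨k, rfl⟩ := mem_powers_iff_mem_zpowers.2 (hg x)
  simpa using sub_dvd_pow_sub_pow (χ g) 1 k

section FiniteField

variable {F : Type*} [Field F] [Fintype F]

theorem mul_dvd_jacobiSum_add_card {R : Type*} [CommRing R] [IsDomain R] {χ ψ : MulChar F R}
    (hχ : χ ≠ 1) (hψ : ψ ≠ 1) {g : Fˣ} (hg : ∀ x, x ∈ Subgroup.zpowers g) :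
    (χ g - 1) * (ψ g - 1) ∣ jacobiSum χ ψ + Fintype.card F := by
  have hexpand : jacobiSum χ ψ + Fintype.card F = ∑ x, (χ x - 1) * (ψ (1 - x) - 1) := by
    have hψsum : ∑ x, ψ (1 - x) = 0 :=
      ((Equiv.subLeft 1).sum_comp ψ).trans (MulChar.sum_eq_zero_of_ne_one hψ)
    simp only [sub_mul, mul_sub, mul_one, one_mul, Finset.sum_sub_distrib, hψsum,
      MulChar.sum_eq_zero_of_ne_one hχ, Finset.sum_const, Finset.card_univ, nsmul_one, jacobiSum]
    ring
  rw [hexpand]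
  refine Finset.dvd_sum fun x _ => ?_
  rcases eq_or_ne x 0 with rfl | hx₀
  · simp
  rcases eq_or_ne (1 - x) 0 with hx₁ | hx₁
  · simp [← sub_eq_zero.1 hx₁]
  exact mul_dvd_mul (apply_generator_sub_one_dvd hg χ (Units.mk0 x hx₀))
    (apply_generator_sub_one_dvd hg ψ (Units.mk0 _ hx₁))

theorem norm_jacobiSum {χ ψ : MulChar F GaussianInt} (hχ : χ ≠ 1) (hψ : ψ ≠ 1)
    (hχψ : χ * ψ ≠ 1) : (jacobiSum χ ψ).norm = Fintype.card F := by
  have hinj := GaussianInt.toComplex_injective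
  have hchar : ringChar ℂ ≠ ringChar F := by
    rw [ringChar.eq_zero]
    exact (CharP.ringChar_ne_zero_of_finite F).symm
  have hJ := jacobiSum_mul_jacobiSum_inv hchar ((MulChar.ringHomComp_ne_one_iff hinj).2 hχ)
    ((MulChar.ringHomComp_ne_one_iff hinj).2 hψ) (by
      rw [← MulChar.ringHomComp_mul]
      exact (MulChar.ringHomComp_ne_one_iff hinj).2 hχψ)
  have hstar (φ₁ φ₂ : MulChar F ℂ) : jacobiSum φ₁⁻¹ φ₂⁻¹ = star (jacobiSum φ₁ φ₂) := by
    simp only [jacobiSum, star_sum, star_mul', MulChar.star_apply']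
  rw [hstar, jacobiSum_ringHomComp, ← starRingEnd_apply, ← GaussianInt.toComplex_star, ← map_mul,
    ← Zsqrtd.norm_eq_mul_conj, map_intCast] at hJ
  exact_mod_cast hJ

end FiniteField

theorem sqrtd_sq : (Zsqrtd.sqrtd : GaussianInt) ^ 2 = -1 := by
  rw [sq, Zsqrtd.dmuld, Int.cast_neg, Int.cast_one]

variable {p : ℕ} [Fact p.Prime]

theorem exists_mulChar_gaussianInt_ringHomComp {m : ℕ} (hm : p = 4 * m + 1) :
    ∃ (χ : MulChar (ZMod p) GaussianInt) (φ : GaussianInt →+* ZMod (p ^ 2)) (g : (ZMod p)ˣ),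
      (∀ x, x ∈ Subgroup.zpowers g) ∧ χ g = Zsqrtd.sqrtd ∧
        χ.ringHomComp φ = teichmuller p ^ (3 * m) := by
  obtain ⟨g, hg⟩ := IsCyclic.exists_generator (α := (ZMod p)ˣ)
  have hcard : Fintype.card (ZMod p)ˣ = 4 * m := by rw [ZMod.card_units]; omega
  have hroot : (Zsqrtd.sqrtd : GaussianInt) ^ Fintype.card (ZMod p)ˣ = 1 := by
    rw [hcard, pow_mul, show 4 = 2 * 2 from rfl, pow_mul, sqrtd_sq]; simp
  have hquartic : (teichmuller p ^ (3 * m)) g * (teichmuller p ^ (3 * m)) g =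
      ((-1 : ℤ) : ZMod (p ^ 2)) := by
    rw [Int.cast_neg, Int.cast_one, ← MulChar.mul_apply, ← pow_add,
      show 3 * m + 3 * m = p - 1 + 2 * m by omega, pow_add, teichmuller_pow_sub_one, one_mul]
    exact teichmuller_pow_half_apply_generator (by omega) hg
  refine ⟨MulChar.ofRootOfUnity (rootsOfUnity.mkOfPowEq _ hroot).2 hg, Zsqrtd.lift ⟨_, hquartic⟩, g,
    hg, MulChar.ofRootOfUnity_spec _ hg, (MulChar.eq_iff hg _ _).2 ?_⟩
  rw [MulChar.ringHomComp_apply, MulChar.ofRootOfUnity_spec]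
  simp

theorem exists_gaussianInt_map_eq_jacobiSum {m : ℕ} (hm : p = 4 * m + 1) :
    ∃ (z : GaussianInt) (φ : GaussianInt →+* ZMod (p ^ 2)),
      z.norm = p ∧ (⟨2, -2⟩ : GaussianInt) ∣ z + (p : GaussianInt) ∧
        φ z = jacobiSum (teichmuller p ^ (3 * m)) (teichmuller p ^ (2 * m)) := by
  obtain ⟨χ, φ, g, hg, hχg, hχ⟩ := exists_mulChar_gaussianInt_ringHomComp hm
  have hne {ψ : MulChar (ZMod p) GaussianInt} (h : (ψ g).re ≠ 1) : ψ ≠ 1 := by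
    rintro rfl
    simp at h
  have hχ2g : (χ ^ 2) g = -1 := by rw [MulChar.pow_apply_coe, hχg, sqrtd_sq]
  have hχ₁ : χ ≠ 1 := hne (by simp [hχg])
  have hχ₂ : χ ^ 2 ≠ 1 := hne (by simp [hχ2g])
  have hχ₃ : χ * χ ^ 2 ≠ 1 := hne (by simp [hχg, hχ2g, MulChar.mul_apply])
  have hdvd := mul_dvd_jacobiSum_add_card hχ₁ hχ₂ hg
  refine ⟨jacobiSum χ (χ ^ 2), φ, ?_, ?_, ?_⟩
  · rw [norm_jacobiSum hχ₁ hχ₂ hχ₃, ZMod.card]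
  -- `2 - 2i = (i - 1)(i² - 1)`
  · rwa [hχg, hχ2g, ZMod.card] at hdvd
  · rw [← jacobiSum_ringHomComp, ← MulChar.ringHomComp_pow, hχ, ← pow_mul,
      show 3 * m * 2 = p - 1 + 2 * m by omega, pow_add, teichmuller_pow_sub_one, one_mul]

end GaussianJacobiSum

section TwoSquares

theorem sq_eq_or_sq_eq_of_dvd_mul_sub_mul {p : ℕ} (hp : p ≠ 0) {a b c d : ℤ}
    (h₁ : (p : ℤ) = a ^ 2 + b ^ 2) (h₂ : (p : ℤ) = c ^ 2 + d ^ 2) (hdvd : (p : ℤ) ∣ a * d - b * c) :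
    a ^ 2 = c ^ 2 ∨ a ^ 2 = d ^ 2 := by
  have hp₀ : (p : ℤ) ≠ 0 := Int.natCast_ne_zero.2 hp
  obtain ⟨t, ht⟩ := hdvd
  have hbrahmagupta : (a * c + b * d) ^ 2 + (a * d - b * c) ^ 2 = (p : ℤ) ^ 2 := by
    linear_combination -(c ^ 2 + d ^ 2) * h₁ - p * h₂
  rw [ht] at hbrahmagupta
  rcases eq_or_ne t 0 with rfl | ht₀
  · refine .inl (mul_left_cancel₀ hp₀ ?_)
    linear_combination a ^ 2 * h₂ - c ^ 2 * h₁ + (a * d + b * c) * ht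
  · have hzero : a * c + b * d = 0 := by
      have ht₁ : 0 < t ^ 2 := by positivity
      exact pow_eq_zero_iff two_ne_zero |>.1
        (by nlinarith [sq_nonneg (p : ℤ), sq_nonneg (a * c + b * d)])
    refine .inr (mul_left_cancel₀ hp₀ ?_)
    linear_combination a ^ 2 * h₂ - d ^ 2 * h₁ + (a * c - b * d) * hzero

theorem sq_eq_or_sq_eq_of_prime_eq_sq_add_sq {p : ℕ} (hp : p.Prime) {a b c d : ℤ}
    (h₁ : (p : ℤ) = a ^ 2 + b ^ 2) (h₂ : (p : ℤ) = c ^ 2 + d ^ 2) :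
    a ^ 2 = c ^ 2 ∨ a ^ 2 = d ^ 2 := by
  have hdvd : (p : ℤ) ∣ (a * d - b * c) * (a * d - -b * c) :=
    ⟨a ^ 2 - c ^ 2, by linear_combination c ^ 2 * h₁ - a ^ 2 * h₂⟩
  rcases (Nat.prime_iff_prime_int.1 hp).dvd_or_dvd hdvd with h | h
  · exact sq_eq_or_sq_eq_of_dvd_mul_sub_mul hp.ne_zero h₁ h₂ h
  · exact sq_eq_or_sq_eq_of_dvd_mul_sub_mul hp.ne_zero (by rw [neg_sq, h₁]) h₂ h

section Primary

variable {p m : ℕ} {z : GaussianInt}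

theorem natCast_eq_re_sq_add_im_sq (hz : z.norm = p) : (p : ℤ) = z.re ^ 2 + z.im ^ 2 := by
  rw [← hz, Zsqrtd.norm_def]
  ring

theorem even_im_and_four_dvd_of_dvd (hdvd : (⟨2, -2⟩ : GaussianInt) ∣ z + (p : GaussianInt)) :
    Even z.im ∧ 4 ∣ z.re + p + z.im := by
  obtain ⟨w, hw⟩ := hdvd
  have hre := congrArg Zsqrtd.re hw
  have him := congrArg Zsqrtd.im hw
  simp only [Zsqrtd.re_add, Zsqrtd.re_natCast, Zsqrtd.re_mul] at hre
  simp only [Zsqrtd.im_add, Zsqrtd.im_natCast, Zsqrtd.im_mul] at him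
  exact ⟨⟨w.im - w.re, by linarith⟩, w.im, by linarith⟩

theorem re_modEq_neg_one_pow (hm : p = 4 * m + 1) (hz : z.norm = p)
    (hdvd : (⟨2, -2⟩ : GaussianInt) ∣ z + (p : GaussianInt)) :
    z.re ≡ -(-1) ^ m [ZMOD 4] := by
  obtain ⟨⟨y, hy⟩, hfour⟩ := even_im_and_four_dvd_of_dvd hdvd
  have hre : Odd z.re := by
    rw [← Int.not_even_iff_odd]
    rintro ⟨x, hx⟩
    omega
  have hsum := natCast_eq_re_sq_add_im_sq hz
  have hre_sq := Int.eight_dvd_sq_sub_one_of_odd hre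
  have hparity : Even m ↔ Even y := by
    rw [← Int.even_coe_nat, ← Int.even_pow' (n := 2) (m := y) two_ne_zero, Int.even_iff,
      Int.even_iff]
    rw [hy, show (y + y) ^ 2 = 4 * y ^ 2 by ring] at hsum
    omega
  rw [Int.ModEq]
  rcases Nat.even_or_odd m with heven | hodd
  · obtain ⟨x, hx⟩ := hparity.1 heven
    rw [heven.neg_one_pow]
    omega
  · obtain ⟨x, hx⟩ := Int.not_even_iff_odd.1 (hparity.not.1 (Nat.not_even_iff_odd.2 hodd))
    rw [hodd.neg_one_pow]
    omega

theorem re_eq_of_primary (hp : p.Prime) (hm : p = 4 * m + 1) (hz : z.norm = p)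
    (hdvd : (⟨2, -2⟩ : GaussianInt) ∣ z + (p : GaussianInt)) {a b : ℤ}
    (hab : (p : ℤ) = a ^ 2 + b ^ 2) (ha : a % 4 = 1) : z.re = -((-1) ^ m * a) := by
  have hre := re_modEq_neg_one_pow hm hz hdvd
  have him := (even_im_and_four_dvd_of_dvd hdvd).1
  have haodd : Odd a := Int.odd_iff.2 (by omega)
  have hre_or : z.re = a ∨ z.re = -a := by
    rcases sq_eq_or_sq_eq_of_prime_eq_sq_add_sq hp hab (natCast_eq_re_sq_add_im_sq hz) with h | h
    · exact sq_eq_sq_iff_eq_or_eq_neg.1 h.symm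
    · exact absurd (h ▸ haodd.pow) (Int.not_odd_iff_even.2 (him.pow_of_ne_zero two_ne_zero))
  rw [Int.ModEq] at hre
  rcases neg_one_pow_eq_or ℤ m with hsign | hsign <;> rw [hsign] at hre ⊢ <;> omega

end Primary

end TwoSquares

section LegendreTrace

variable {p m : ℕ} [Fact p.Prime]

theorem isUnit_jacobiSum_teichmuller (hm : p = 4 * m + 1) :
    IsUnit (jacobiSum (teichmuller p ^ (3 * m)) (teichmuller p ^ (2 * m))) := by
  have hp : p.Prime := Fact.out
  have hbinom : (m.centralBinom : ZMod p) ≠ 0 := by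
    rw [Ne, ZMod.natCast_eq_zero_iff]
    intro hdvd
    have hpos := hp.factorization_pos_of_dvd m.centralBinom_ne_zero hdvd
    rw [Nat.factorization_centralBinom_eq_zero_of_two_mul_lt (by omega)] at hpos
    exact hpos.false
  apply isUnit_of_reduction_ne_zero
  rw [jacobiSum_teichmuller_pow_three_mul hm]
  simpa using hbinom

theorem two_mul_mul_eval_neg_one_shiftedLegendre (hm : p = 4 * m + 1) {a b : ℤ}
    (hab : (p : ℤ) = a ^ 2 + b ^ 2) (ha : a % 4 = 1) :
    2 * (a : ZMod (p ^ 2)) * ((shiftedLegendre (2 * m)).eval (-1) : ℤ) =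
      (-1) ^ m * (4 * (a : ZMod (p ^ 2)) ^ 2 - p) := by
  obtain ⟨z, φ, hz, hdvd, hφ⟩ := exists_gaussianInt_map_eq_jacobiSum hm
  have hunit : IsUnit (φ z) := hφ ▸ isUnit_jacobiSum_teichmuller hm
  have hD := eval_neg_one_shiftedLegendre_add_jacobiSum hm
  rw [← hφ] at hD
  have hnorm : φ z * φ (star z) = p := by
    rw [← map_mul, ← Zsqrtd.norm_eq_mul_conj, hz, Int.cast_natCast, map_natCast]
  have htrace : φ z + φ (star z) = -2 * (-1) ^ m * a := by
    have hre : z + star z = ((2 * z.re : ℤ) : GaussianInt) := by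
      ext <;> simp
      ring
    rw [← map_add, hre, map_intCast, re_eq_of_primary Fact.out hm hz hdvd hab ha]
    push_cast
    ring
  have hconj_sq : φ (star z) ^ 2 = 0 := by
    refine (hunit.pow 2).mul_right_eq_zero.1 ?_
    rw [← mul_pow, hnorm, natCast_self_sq]
  have hsign : ((-1) ^ m * (-1) ^ m : ZMod (p ^ 2)) = 1 := by rw [← mul_pow]; simp
  generalize (-1 : ZMod (p ^ 2)) ^ m = S at *
  have h2a : 2 * (a : ZMod (p ^ 2)) = -(S * (φ z + φ (star z))) := by
    linear_combination S * htrace - 2 * a * hsign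
  linear_combination 2 * a * hD - φ z * h2a - S * (2 * a - S * (φ z + φ (star z))) * h2a -
    S * (φ z + φ (star z)) ^ 2 * hsign - S * hnorm - S * hconj_sq

end LegendreTrace

section RationalCongruence

theorem not_dvd_den_add {p : ℕ} (hp : p.Prime) {x y : ℚ} (hx : ¬ p ∣ x.den) (hy : ¬ p ∣ y.den) :
    ¬ p ∣ (x + y).den :=
  fun h => (hp.dvd_mul.1 (h.trans (Rat.add_den_dvd x y))).elim hx hy

theorem ratCongr.trans {p k : ℕ} (hp : p.Prime) {x y z : ℚ} (hxy : ratCongr p k x y)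
    (hyz : ratCongr p k y z) : ratCongr p k x z := by
  obtain ⟨c, hc, hcden⟩ := hxy
  obtain ⟨d, hd, hdden⟩ := hyz
  exact ⟨c + d, by linear_combination hc + hd, not_dvd_den_add hp hcden hdden⟩

theorem ratCongr_sum {ι : Type*} {p k : ℕ} (hp : p.Prime) {s : Finset ι} {f g : ι → ℚ}
    (h : ∀ i ∈ s, ratCongr p k (f i) (g i)) :
    ratCongr p k (∑ i ∈ s, f i) (∑ i ∈ s, g i) := by
  choose! c hc hcden using h
  refine ⟨∑ i ∈ s, c i, ?_, ?_⟩
  · rw [← Finset.sum_sub_distrib, Finset.mul_sum]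
    exact Finset.sum_congr rfl hc
  · exact Finset.sum_induction c (fun x => ¬ p ∣ x.den) (fun _ _ => not_dvd_den_add hp)
      (by simpa using hp.ne_one) hcden

theorem ratCongr_div_div {p k : ℕ} (hp : p.Prime) {a b c d : ℤ} (hb : ¬ (p : ℤ) ∣ b)
    (hd : ¬ (p : ℤ) ∣ d) (h : (a * d : ZMod (p ^ k)) = c * b) : ratCongr p k (a / b) (c / d) := by
  have hb₀ : (b : ℚ) ≠ 0 := Int.cast_ne_zero.2 (by rintro rfl; exact hb (dvd_zero _))
  have hd₀ : (d : ℚ) ≠ 0 := Int.cast_ne_zero.2 (by rintro rfl; exact hd (dvd_zero _))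
  obtain ⟨t, ht⟩ : ((p ^ k : ℕ) : ℤ) ∣ a * d - c * b := by
    rw [← ZMod.intCast_zmod_eq_zero_iff_dvd]
    push_cast
    exact sub_eq_zero.2 h
  have htℚ := congrArg (Int.cast : ℤ → ℚ) ht
  push_cast at htℚ
  refine ⟨t / (b * d : ℤ), ?_, fun hden => ?_⟩
  · push_cast
    field_simp
    linear_combination htℚ
  · have hdvd : (p : ℤ) ∣ b * d := by
      rw [← Rat.divInt_eq_div] at hden
      exact (Int.natCast_dvd_natCast.2 hden).trans (Rat.den_dvd t (b * d))
    exact ((Nat.prime_iff_prime_int.1 hp).dvd_or_dvd hdvd).elim hb hd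

end RationalCongruence

section LegendreCoefficients

theorem not_natCast_dvd_two_pow {p : ℕ} (hp : p.Prime) (hp₂ : p ≠ 2) (n : ℕ) :
    ¬ (p : ℤ) ∣ 2 ^ n := by
  intro h
  have htwo : p ∣ 2 := Int.natCast_dvd_natCast.1 ((Nat.prime_iff_prime_int.1 hp).dvd_of_dvd_pow h)
  exact hp₂ ((Nat.prime_dvd_prime_iff_eq hp Nat.prime_two).1 htwo)

theorem not_natCast_dvd_of_eq_sq_add_sq {p : ℕ} (hp : p.Prime) {a b : ℤ} (ha : a ≠ 0)
    (hab : (p : ℤ) = a ^ 2 + b ^ 2) : ¬ (p : ℤ) ∣ a := by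
  intro h
  have hle : (p : ℤ) ^ 2 ≤ a ^ 2 := Int.le_of_dvd (by positivity) (pow_dvd_pow_of_dvd h 2)
  have hlt : (1 : ℤ) < p := by exact_mod_cast hp.one_lt
  nlinarith [sq_nonneg b]

variable {p m : ℕ} [Fact p.Prime]

theorem ratCongr_sum_choose_sq_div (hm : p = 4 * m + 1) :
    ratCongr p 2 (∑ k ∈ range (m + 1), ((4 * k).choose (2 * k) : ℚ) ^ 2 / 16 ^ (2 * k))
      (∑ k ∈ range (m + 1), (shiftedLegendre (2 * m)).coeff (2 * k) : ℤ) := by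
  have hp : p.Prime := Fact.out
  have hp₂ : p ≠ 2 := by omega
  rw [Int.cast_sum]
  refine ratCongr_sum hp fun k hk => ?_
  have hkm : k ≤ m := Nat.lt_succ_iff.1 (mem_range.1 hk)
  have hterm := sixteen_pow_mul_coeff_shiftedLegendre (p := p) (n := 2 * m) (k := 2 * k)
    (by omega) (by omega)
  rw [Nat.centralBinom, ← mul_assoc] at hterm
  have hden : ¬ (p : ℤ) ∣ 16 ^ (2 * k) := by
    rw [show (16 : ℤ) = 2 ^ 4 by norm_num, ← pow_mul]
    exact not_natCast_dvd_two_pow hp hp₂ _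
  have hone : ¬ (p : ℤ) ∣ 1 := (Nat.prime_iff_prime_int.1 hp).not_dvd_one
  have hcongr := ratCongr_div_div (k := 2) (a := ((4 * k).choose (2 * k)) ^ 2)
    (c := (shiftedLegendre (2 * m)).coeff (2 * k)) hp hden hone (by
      push_cast
      linear_combination -hterm)
  simpa using hcongr

theorem ratCongr_sum_coeff_shiftedLegendre (hm : p = 4 * m + 1) {a b : ℤ}
    (hab : (p : ℤ) = a ^ 2 + b ^ 2) (ha : a % 4 = 1) :
    ratCongr p 2 (∑ k ∈ range (m + 1), (shiftedLegendre (2 * m)).coeff (2 * k) : ℤ)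
      (1 / 2 + (-1 : ℚ) ^ m * a - (-1 : ℚ) ^ m * p / (4 * a)) := by
  have hp : p.Prime := Fact.out
  have ha₀ : a ≠ 0 := by rintro rfl; simp at ha
  have hden : ¬ (p : ℤ) ∣ 4 * a := fun h =>
    ((Nat.prime_iff_prime_int.1 hp).dvd_or_dvd h).elim
      (not_natCast_dvd_two_pow hp (by omega) 2) (not_natCast_dvd_of_eq_sq_add_sq hp ha₀ hab)
  have hone : ¬ (p : ℤ) ∣ 1 := (Nat.prime_iff_prime_int.1 hp).not_dvd_one
  have heval := eval_one_add_eval_neg_one (natDegree_shiftedLegendre (2 * m)).le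
  rw [eval_one_shiftedLegendre, (even_two_mul m).neg_one_pow] at heval
  generalize ∑ k ∈ range (m + 1), (shiftedLegendre (2 * m)).coeff (2 * k) = S at heval ⊢
  have hevalZMod := congrArg (Int.cast : ℤ → ZMod (p ^ 2)) heval
  have hcongr := ratCongr_div_div (k := 2) (a := S) (c := 2 * a + (-1) ^ m * (4 * a ^ 2 - p))
    hp hone hden (by
      push_cast at hevalZMod ⊢
      linear_combination two_mul_mul_eval_neg_one_shiftedLegendre hm hab ha -
        2 * (a : ZMod (p ^ 2)) * hevalZMod)
  have haℚ : (a : ℚ) ≠ 0 := Int.cast_ne_zero.2 ha₀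
  convert hcongr using 1
  · simp
  · push_cast
    field_simp
    ring

end LegendreCoefficients

theorem stmt19 (p : ℕ) (hp : p.Prime) (hp4 : p % 4 = 1) (a b : ℤ)
    (hab : (p : ℤ) = a ^ 2 + b ^ 2) (ha : a % 4 = 1) :
    ratCongr p 2
      (∑ k ∈ Finset.range ((p - 1) / 4 + 1), ((4 * k).choose (2 * k) : ℚ) ^ 2 / 16 ^ (2 * k))
      (1 / 2 + (-1 : ℚ) ^ ((p - 1) / 4) * (a : ℚ) -
        (-1 : ℚ) ^ ((p - 1) / 4) * (p : ℚ) / (4 * (a : ℚ))) := by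
  have : Fact p.Prime := ⟨hp⟩
  obtain ⟨m, hm⟩ : ∃ m, p = 4 * m + 1 := ⟨p / 4, by omega⟩
  rw [show (p - 1) / 4 = m by omega]
  exact (ratCongr_sum_choose_sq_div hm).trans hp (ratCongr_sum_coeff_shiftedLegendre hm hab ha)
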